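/- Let k ≥ 1 and let G = (V,E) be a finite simple graph with |V| ≥ k that is a forest (contains no cycles). Then ∑_{i=1}^{k} λ_i(L(G)) ≤ |E| + 2k − 1. -/

import Mathlib

open Finset

/-- The `i`-th largest entry (1-indexed, so `i = 1` gives the maximum) of a tuple
`f : Fin n → ℝ`, counted with multiplicity. Junk value `0` outside the range `1 ≤ i ≤ n`. -/
noncomputable def ithLargest {n : ℕ} (f : Fin n → ℝ) (i : ℕ) : ℝ :=
  if h : 1 ≤ i ∧ i ≤ n then f (Tuple.sort f (Fin.rev ⟨i - 1, by omega⟩)) else 0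

/-- The eigenvalues of the Laplacian matrix of a finite simple graph `G`
(as a tuple indexed by the vertices, with multiplicity). -/
noncomputable def lapEigs {n : ℕ} (G : SimpleGraph (Fin n)) [DecidableRel G.Adj] :
    Fin n → ℝ :=
  (SimpleGraph.posSemidef_lapMatrix ℝ G).isHermitian.eigenvalues

/-- The degree sequence of `G`, as a real-valued tuple indexed by the vertices. -/
noncomputable def degTuple {n : ℕ} (G : SimpleGraph (Fin n)) [DecidableRel G.Adj] :
    Fin n → ℝ :=
  fun v => (G.degree v : ℝ)

/-!
Let `P` be positive semidefinite with `L(G) ≤ 2 • 1 + P` in the Loewner order. Reading off the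
diagonal in an eigenbasis of `L(G)`, any `k` of its eigenvalues sum to at most `2 * k + tr P`, so it
suffices to find such a `P` with `tr P ≤ |E| - 1`. For a star with `d` edges, the only Laplacian
eigenvalue that can exceed `2` is `d + 1`, and `P` is `d - 1` times the projection onto its
eigenvector, the row of the Laplacian at the centre.
A forest with an edge is built from stars: either the component of some vertex is a star centred
at that vertex, and splits off, or some edge has further edges at both of its ends. Such an edge is
a bridge; removing it leaves two vertex-disjoint forests, each saving `1` on its own edge count,
while putting it back adds its Laplacian, of trace `2`, to `P`, against one more edge.
-/

section Spectral

open Matrix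
open scoped MatrixOrder ComplexOrder

lemma trace_conjStarAlgAut {R n : Type*} [CommRing R] [StarRing R] [Fintype n] [DecidableEq n]
    (U : unitary (Matrix n n R)) (P : Matrix n n R) :
    (Unitary.conjStarAlgAut R _ U P).trace = P.trace := by
  rw [Unitary.conjStarAlgAut_apply, trace_mul_comm, ← mul_assoc, Unitary.coe_star_mul_self, one_mul]

variable {𝕜 n : Type*} [RCLike 𝕜]

lemma re_diag_le_re_diag {A B : Matrix n n 𝕜} (h : A ≤ B) (i : n) :
    RCLike.re (A i i) ≤ RCLike.re (B i i) := by
  have : 0 ≤ (B - A) i i := (le_iff.1 h).diag_nonneg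
  exact (RCLike.le_iff_re_im.1 (sub_nonneg.1 this)).1

theorem sum_eigenvalues_le_of_le_smul_one_add [Fintype n] [DecidableEq n] {A P : Matrix n n 𝕜}
    (hA : A.IsHermitian) (hP : 0 ≤ P) {r : ℝ} (h : A ≤ r • (1 : Matrix n n 𝕜) + P) (s : Finset n) :
    ∑ i ∈ s, hA.eigenvalues i ≤ #s * r + RCLike.re P.trace := by
  set φ := Unitary.conjStarAlgAut 𝕜 (Matrix n n 𝕜) (star hA.eigenvectorUnitary)
  have hle : diagonal (RCLike.ofReal ∘ hA.eigenvalues) ≤ r • (1 : Matrix n n 𝕜) + φ P := by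
    have := OrderHomClass.mono φ h
    rwa [hA.conjStarAlgAut_star_eigenvectorUnitary, map_add, RCLike.real_smul_eq_coe_smul (K := 𝕜),
      map_smul, map_one, ← RCLike.real_smul_eq_coe_smul] at this
  have eigenvalue_le (i : n) : hA.eigenvalues i ≤ r + RCLike.re (φ P i i) := by
    simpa [RCLike.smul_re] using re_diag_le_re_diag hle i
  have diag_nonneg (i : n) : 0 ≤ RCLike.re (φ P i i) := by
    simpa using re_diag_le_re_diag (map_nonneg φ hP) i
  calc ∑ i ∈ s, hA.eigenvalues i
      ≤ ∑ i ∈ s, (r + RCLike.re (φ P i i)) := sum_le_sum fun i _ ↦ eigenvalue_le i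
    _ = #s * r + ∑ i ∈ s, RCLike.re (φ P i i) := by
      rw [sum_add_distrib, sum_const, nsmul_eq_mul]
    _ ≤ #s * r + ∑ i, RCLike.re (φ P i i) := by
      gcongr
      · exact fun i _ _ ↦ diag_nonneg i
      · exact subset_univ s
    _ = #s * r + RCLike.re P.trace := by
      rw [← trace_conjStarAlgAut (star hA.eigenvectorUnitary) P, trace, map_sum]
      rfl

lemma diagonal_le_diagonal [DecidableEq n] {d e : n → ℝ} (h : d ≤ e) :
    diagonal d ≤ diagonal e := by
  rw [le_iff, diagonal_sub]
  exact .diagonal (sub_nonneg.2 h)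

lemma diagonal_indicator_one_le_one [DecidableEq n] (s : Set n) :
    diagonal (s.indicator 1) ≤ (1 : Matrix n n ℝ) :=
  diagonal_one (n := n) (α := ℝ) ▸ diagonal_le_diagonal (Set.indicator_le_self' (by simp))

end Spectral

section Laplacian

open Matrix SimpleGraph

variable {V : Type*} {G H : SimpleGraph V}

lemma disjoint_of_disjoint_support (h : Disjoint G.support H.support) : Disjoint G H :=
  disjoint_iff_inf_le.2 fun _ _ hvw ↦ Set.disjoint_left.1 h ⟨_, hvw.1⟩ ⟨_, hvw.2⟩

lemma support_sup (G H : SimpleGraph V) : (G ⊔ H).support = G.support ∪ H.support := by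
  ext v
  simp [mem_support, exists_or]

lemma card_edgeFinset_sup_of_disjoint [Fintype G.edgeSet] [Fintype H.edgeSet]
    {_ : Fintype (G ⊔ H).edgeSet} (h : Disjoint G H) :
    #(G ⊔ H).edgeFinset = #G.edgeFinset + #H.edgeFinset := by
  classical
  rw [edgeFinset_sup, card_union_of_disjoint (disjoint_edgeFinset.2 h)]

variable [Fintype V] [DecidableEq V] [DecidableRel G.Adj] [DecidableRel H.Adj]

lemma lapMatrix_sup_of_disjoint (R : Type*) [AddCommGroupWithOne R]
    [DecidableRel (G ⊔ H).Adj] (h : Disjoint G H) :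
    (G ⊔ H).lapMatrix R = G.lapMatrix R + H.lapMatrix R := by
  have hadj : (G ⊔ H).adjMatrix R = G.adjMatrix R + H.adjMatrix R := by
    ext v w
    have : ¬ (G.Adj v w ∧ H.Adj v w) := fun hvw ↦ h.le_bot hvw
    by_cases hG : G.Adj v w <;> simp_all [adjMatrix_apply]
  have hdeg : (G ⊔ H).degMatrix R = G.degMatrix R + H.degMatrix R := by
    simp only [degMatrix, diagonal_add, ← card_neighborFinset_eq_degree,
      neighborFinset_sup_of_disjoint _ h, card_disjUnion, Nat.cast_add]
  rw [lapMatrix, lapMatrix, lapMatrix, hadj, hdeg, add_sub_add_comm]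

lemma trace_lapMatrix (R : Type*) [Ring R] (G : SimpleGraph V) [DecidableRel G.Adj] :
    (G.lapMatrix R).trace = 2 * #G.edgeFinset := by
  rw [lapMatrix, trace_sub, trace_adjMatrix, sub_zero, degMatrix, trace_diagonal]
  exact_mod_cast congrArg (Nat.cast (R := R)) G.sum_degrees_eq_twice_card_edges

end Laplacian

section Star

open Matrix SimpleGraph
open scoped MatrixOrder

variable {V : Type*} [Fintype V] {G : SimpleGraph V} [DecidableRel G.Adj] {u : V}

lemma card_edgeFinset_eq_degree_of_le_starGraph (hG : G ≤ starGraph u) :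
    #G.edgeFinset = G.degree u := by
  classical
  have : G.edgeFinset = G.incidenceFinset u := by
    refine Finset.Subset.antisymm (fun e he ↦ ?_) (G.incidenceFinset_subset u)
    induction e with | _ v w
    have hvw : G.Adj v w := by simpa using he
    rw [mem_incidenceFinset]
    rcases (starGraph_adj.1 (hG hvw)).2 with rfl | rfl
    · exact G.mk'_mem_incidenceSet_left_iff.2 hvw
    · exact G.mk'_mem_incidenceSet_right_iff.2 hvw
  rw [this, card_incidenceFinset_eq_degree]

variable [DecidableEq V]

lemma support_eq_insert_neighborFinset_of_le_starGraph (hG : G ≤ starGraph u)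
    (hu : 0 < G.degree u) : G.support = ↑(insert u (G.neighborFinset u)) := by
  ext v
  rw [mem_coe, mem_insert, mem_neighborFinset, mem_support]
  constructor
  · rintro ⟨w, hvw⟩
    rcases (starGraph_adj.1 (hG hvw)).2 with rfl | rfl
    · exact .inl rfl
    · exact .inr hvw.symm
  · rintro (rfl | huv)
    · exact (G.degree_pos_iff_exists_adj v).1 hu
    · exact ⟨u, huv.symm⟩

lemma dotProduct_lapMatrix_mulVec_of_le_starGraph (hG : G ≤ starGraph u) (x : V → ℝ) :
    x ⬝ᵥ G.lapMatrix ℝ *ᵥ x = ∑ v ∈ G.neighborFinset u, (x u - x v) ^ 2 := by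
  have row_sum (v : V) : (∑ w, if G.Adj v w then (x v - x w) ^ 2 else 0) =
      (if v = u then ∑ w ∈ G.neighborFinset u, (x u - x w) ^ 2 else 0) +
        if G.Adj u v then (x u - x v) ^ 2 else 0 := by
    obtain rfl | hvu := eq_or_ne v u
    · simp [neighborFinset_eq_filter, sum_filter]
    · have hadj (w : V) : G.Adj v w ↔ w = u ∧ G.Adj u v :=
        ⟨fun h ↦ by
          obtain rfl := (starGraph_adj.1 (hG h)).2.resolve_left hvu
          exact ⟨rfl, h.symm⟩, fun ⟨hw, h⟩ ↦ hw ▸ h.symm⟩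
      simp [hvu, hadj, ite_and, sub_sq_comm (x u)]
  rw [← toLinearMap₂'_apply', lapMatrix_toLinearMap₂', sum_congr rfl fun v _ ↦ row_sum v,
    sum_add_distrib, Fintype.sum_ite_eq', ← sum_filter, ← neighborFinset_eq_filter,
    add_self_div_two]

lemma dotProduct_lapMatrix_row_self (R : Type*) [CommRing R] (G : SimpleGraph V)
    [DecidableRel G.Adj] (u : V) :
    G.lapMatrix R u ⬝ᵥ G.lapMatrix R u = G.degree u * (G.degree u + 1) := by
  have hrow : ∀ v ∈ G.neighborFinset u, G.lapMatrix R u v = -1 := fun v hv ↦ by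
    rw [mem_neighborFinset] at hv
    simp [lapMatrix, degMatrix, hv, hv.ne]
  have hdiag : G.lapMatrix R u u = G.degree u := by simp [lapMatrix, degMatrix]
  calc G.lapMatrix R u ⬝ᵥ G.lapMatrix R u
      = G.degree u * G.lapMatrix R u u - ∑ v ∈ G.neighborFinset u, G.lapMatrix R u v :=
        G.lapMatrix_mulVec_apply u (G.lapMatrix R u)
    _ = G.degree u * (G.degree u + 1) := by
      rw [sum_congr rfl hrow, hdiag, sum_const, card_neighborFinset_eq_degree, nsmul_eq_mul]
      ring

lemma dotProduct_diagonal_indicator_mulVec {R : Type*} [CommSemiring R] (s : Finset V)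
    (x : V → R) :
    x ⬝ᵥ diagonal ((s : Set V).indicator 1) *ᵥ x = ∑ v ∈ s, x v ^ 2 := by
  simp [dotProduct, mulVec_diagonal, Set.indicator_apply, sq, sum_ite_mem]

-- Here `t` is the value at the centre of a star with `d` leaves, and `s` and `q` are the sums of
-- the values at the leaves and of their squares.
lemma star_quadratic_form_le {d s t q : ℝ} (hd : 1 ≤ d) (hs : s ^ 2 ≤ d * q) :
    d * t ^ 2 - 2 * t * s + q ≤
      2 * (t ^ 2 + q) + (d - 1) / (d * (d + 1)) * (d * t - s) ^ 2 := by
  have hq : s ^ 2 / d ≤ q := (div_le_iff₀' (by linarith)).2 hs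
  have identity : (2 - d) * t ^ 2 + 2 * t * s + s ^ 2 / d +
      (d - 1) / (d * (d + 1)) * (d * t - s) ^ 2 = 2 / (d + 1) * (t + s) ^ 2 := by
    have : d ≠ 0 := by linarith
    have : d + 1 ≠ 0 := by linarith
    field_simp
    ring
  have : 0 ≤ 2 / (d + 1) * (t + s) ^ 2 := by positivity
  linarith

lemma lapMatrix_le_of_le_starGraph (hG : G ≤ starGraph u) (hu : 0 < G.degree u) :
    G.lapMatrix ℝ ≤ (2 : ℝ) • diagonal (G.support.indicator 1) +
      ((G.degree u - 1) / (G.degree u * (G.degree u + 1)) : ℝ) •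
        vecMulVec (G.lapMatrix ℝ u) (G.lapMatrix ℝ u) := by
  rw [support_eq_insert_neighborFinset_of_le_starGraph hG hu]
  refine .of_dotProduct_mulVec_nonneg ?_ fun x ↦ ?_
  · have hrank_one := (posSemidef_vecMulVec_self_star (G.lapMatrix ℝ u)).isHermitian
    exact (((isHermitian_diagonal _).smul (.all _)).add (hrank_one.smul (.all _))).sub
      (G.isHermitian_lapMatrix ℝ)
  set N := G.neighborFinset u
  have hform : ∑ v ∈ N, (x u - x v) ^ 2 =
      G.degree u * x u ^ 2 - 2 * x u * ∑ v ∈ N, x v + ∑ v ∈ N, x v ^ 2 := by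
    simp only [sub_sq, sum_add_distrib, sum_sub_distrib, ← mul_sum, sum_const, nsmul_eq_mul]
    rfl
  have hrow : G.lapMatrix ℝ u ⬝ᵥ x = G.degree u * x u - ∑ v ∈ N, x v :=
    G.lapMatrix_mulVec_apply u x
  have key := star_quadratic_form_le (t := x u) (d := G.degree u) (by exact_mod_cast hu)
    (sq_sum_le_card_mul_sum_sq (s := N) (f := x))
  have huN : u ∉ N := by simp [N]
  rw [star_trivial, sub_mulVec, add_mulVec, smul_mulVec, smul_mulVec, dotProduct_sub,
    dotProduct_add, dotProduct_smul, dotProduct_smul, vecMulVec_mulVec,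
    dotProduct_lapMatrix_mulVec_of_le_starGraph hG,
    dotProduct_diagonal_indicator_mulVec, hform, hrow, sum_insert huN,
    dotProduct_smul, dotProduct_comm x, hrow]
  simp only [smul_eq_mul, MulOpposite.smul_eq_mul_unop, MulOpposite.unop_op]
  linarith

end Star

section Deficit

open Matrix SimpleGraph
open scoped MatrixOrder

variable {V : Type*} [Fintype V] [DecidableEq V] {G H : SimpleGraph V}
  [DecidableRel G.Adj] {b c : ℕ}

/-- `G` has Laplacian deficit (at least) `c` if some positive semidefinite `P` of trace at most
`|E| - c` satisfies `L(G) ≤ 2 • I + P`, where `I` is the coordinate projection onto the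
non-isolated vertices. Any `k` Laplacian eigenvalues then sum to at most `|E| + 2 * k - c`. With the
projection in place of the identity, deficits add up over vertex-disjoint graphs. -/
def HasLapDeficit (G : SimpleGraph V) [DecidableRel G.Adj] (c : ℕ) : Prop :=
  ∃ P : Matrix V V ℝ, 0 ≤ P ∧ P.trace + c ≤ #G.edgeFinset ∧
    G.lapMatrix ℝ ≤ (2 : ℝ) • diagonal (G.support.indicator 1) + P

namespace HasLapDeficit

lemma mono (h : HasLapDeficit G c) (hbc : b ≤ c) : HasLapDeficit G b := by
  obtain ⟨P, hP, htrace, hle⟩ := h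
  exact ⟨P, hP, htrace.trans' (by gcongr), hle⟩

lemma of_eq_bot (h : G = ⊥) : HasLapDeficit G 0 :=
  ⟨G.lapMatrix ℝ, (posSemidef_lapMatrix ℝ G).nonneg,
    by simp [trace_lapMatrix, edgeFinset_eq_empty.2 h], by simp [h]⟩

lemma sup_of_disjoint [DecidableRel (G ⊔ H).Adj] (hG : HasLapDeficit G (c + H.edgeSet.ncard))
    (h : Disjoint G H) : HasLapDeficit (G ⊔ H) c := by
  classical
  obtain ⟨P, hP, htrace, hle⟩ := hG
  refine ⟨P + H.lapMatrix ℝ, add_nonneg hP (posSemidef_lapMatrix ℝ H).nonneg, ?_, ?_⟩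
  · rw [← H.coe_edgeFinset, Set.ncard_coe_finset] at htrace
    rw [card_edgeFinset_sup_of_disjoint h, trace_add, trace_lapMatrix]
    push_cast at htrace ⊢
    linarith
  · have hsupport : diagonal (G.support.indicator 1) ≤
        diagonal ((G ⊔ H).support.indicator (1 : V → ℝ)) :=
      diagonal_le_diagonal (Set.indicator_le_indicator_of_subset (support_mono le_sup_left)
        fun _ ↦ zero_le_one)
    rw [lapMatrix_sup_of_disjoint ℝ h, ← add_assoc]
    gcongr
    exact hle.trans (by gcongr)

lemma of_le_starGraph {u : V} (hG : G ≤ starGraph u) (hu : u ∈ G.support) :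
    HasLapDeficit G 1 := by
  have hdeg : 0 < G.degree u := (G.degree_pos_iff_exists_adj u).2 hu
  have hdeg' : (1 : ℝ) ≤ G.degree u := by exact_mod_cast hdeg
  refine ⟨_, ?_, ?_, lapMatrix_le_of_le_starGraph hG hdeg⟩
  · exact smul_nonneg (div_nonneg (by linarith) (by positivity))
      (posSemidef_vecMulVec_self_star (G.lapMatrix ℝ u)).nonneg
  · rw [trace_smul, trace_vecMulVec, dotProduct_lapMatrix_row_self,
      card_edgeFinset_eq_degree_of_le_starGraph hG, smul_eq_mul, div_mul_cancel₀ _ (by positivity)]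
    simp

theorem sum_eigenvalues_le (hG : HasLapDeficit G c) (s : Finset V) :
    ∑ i ∈ s, (posSemidef_lapMatrix ℝ G).isHermitian.eigenvalues i ≤
      (#G.edgeFinset : ℝ) + 2 * #s - c := by
  obtain ⟨P, hP, htrace, hle⟩ := hG
  have hle_one : G.lapMatrix ℝ ≤ (2 : ℝ) • 1 + P :=
    hle.trans (by gcongr; exact diagonal_indicator_one_le_one _)
  have := sum_eigenvalues_le_of_le_smul_one_add
    (posSemidef_lapMatrix ℝ G).isHermitian hP hle_one s
  rw [RCLike.re_to_real] at this
  linarith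

variable [DecidableRel H.Adj]

lemma of_eq (hG : HasLapDeficit G c) (h : G = H) : HasLapDeficit H c := by
  subst h
  convert hG

lemma sup_of_disjoint_support [DecidableRel (G ⊔ H).Adj] (hG : HasLapDeficit G b)
    (hH : HasLapDeficit H c) (h : Disjoint G.support H.support) :
    HasLapDeficit (G ⊔ H) (b + c) := by
  obtain ⟨P, hP, htraceP, hleP⟩ := hG
  obtain ⟨Q, hQ, htraceQ, hleQ⟩ := hH
  have hdisj := disjoint_of_disjoint_support h
  refine ⟨P + Q, add_nonneg hP hQ, ?_, ?_⟩
  · rw [card_edgeFinset_sup_of_disjoint hdisj, trace_add]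
    push_cast
    linarith
  · rw [lapMatrix_sup_of_disjoint ℝ hdisj, support_sup, Set.indicator_union_of_disjoint h,
      ← diagonal_add, smul_add, add_add_add_comm]
    exact add_le_add hleP hleQ

end HasLapDeficit

end Deficit

section Decomposition

open SimpleGraph

variable {V : Type*} {G : SimpleGraph V} {u v a b : V}

lemma disjoint_support_component_sdiff (C : G.ConnectedComponent) :
    Disjoint C.toSimpleGraph.spanningCoe.support (G \ C.toSimpleGraph.spanningCoe).support := by
  refine Set.disjoint_left.2 fun v ⟨w, hw⟩ ⟨w', hw', hnot⟩ ↦ hnot ?_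
  exact C.adj_spanningCoe_toSimpleGraph.2 ⟨(C.adj_spanningCoe_toSimpleGraph.1 hw).1, hw'⟩

lemma exists_sup_eq_sdiff_edge_of_isBridge (h : G.IsBridge s(u, v))
    (hua : G.Adj u a) (hav : a ≠ v) (hvb : G.Adj v b) (hbu : b ≠ u) :
    ∃ A B : SimpleGraph V, A ≠ ⊥ ∧ B ≠ ⊥ ∧ Disjoint A.support B.support ∧
      A ⊔ B = G \ edge u v := by
  have huv : ¬ (G \ edge u v).Reachable u v := isBridge_iff.1 h
  set H := G \ edge u v
  have hne : u ≠ v := by rintro rfl; exact huv .rfl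
  have hHua : H.Adj u a := by simp [H, edge_adj, hua, hav, hne]
  have hHvb : H.Adj v b := by simp [H, edge_adj, hvb, hbu, hne.symm]
  let C := H.connectedComponentMk u
  refine ⟨C.toSimpleGraph.spanningCoe, H \ C.toSimpleGraph.spanningCoe, ?_, ?_,
    disjoint_support_component_sdiff C, sup_sdiff_cancel_right ?_⟩
  · exact ne_bot_iff_exists_adj.2 ⟨u, a, C.adj_spanningCoe_toSimpleGraph.2 ⟨rfl, hHua⟩⟩
  · refine ne_bot_iff_exists_adj.2 ⟨v, b, hHvb, fun hvb' ↦ huv ?_⟩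
    exact (ConnectedComponent.exact (C.adj_spanningCoe_toSimpleGraph.1 hvb').1).symm
  · exact fun _ _ hvw ↦ (C.adj_spanningCoe_toSimpleGraph.1 hvw).2

lemma exists_center_of_forall_adj (hne : G ≠ ⊥)
    (h : ∀ u v, G.Adj u v → (∀ a, G.Adj u a → a = v) ∨ ∀ b, G.Adj v b → b = u) :
    ∃ u ∈ G.support, ∀ v, G.Adj u v → ∀ w, G.Adj v w → w = u := by
  obtain ⟨u, v, huv⟩ := ne_bot_iff_exists_adj.1 hne
  by_cases hu : ∀ a, G.Adj u a → a = v
  · refine ⟨v, ⟨u, huv.symm⟩, fun a hva ↦ ?_⟩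
    rcases h v a hva with hv_leaf | ha_leaf
    · obtain rfl : u = a := hv_leaf u huv.symm
      exact hu
    · exact ha_leaf
  · push Not at hu
    obtain ⟨c, huc, hcv⟩ := hu
    refine ⟨u, ⟨v, huv⟩, fun a hua ↦ (h u a hua).resolve_left fun hu_leaf ↦ hcv ?_⟩
    rw [hu_leaf c huc, hu_leaf v huv]

lemma disjoint_support_inf_starGraph_sdiff (h : ∀ v, G.Adj u v → ∀ w, G.Adj v w → w = u) :
    Disjoint (G ⊓ starGraph u).support (G \ starGraph u).support := by
  refine Set.disjoint_left.2 fun v ⟨w, hvw, hstar⟩ ⟨w', hvw', hnot⟩ ↦ hnot ?_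
  rw [starGraph_adj] at hstar ⊢
  rcases hstar.2 with rfl | rfl
  · exact ⟨hvw'.ne, .inl rfl⟩
  · exact ⟨hvw'.ne, .inr (h v hvw.symm w' hvw')⟩

end Decomposition

section Forest

open SimpleGraph
open scoped MatrixOrder

variable {V : Type*} [Fintype V] [DecidableEq V]

theorem hasLapDeficit_one_of_isAcyclic (G : SimpleGraph V) [inst : DecidableRel G.Adj]
    (hG : G.IsAcyclic) (hne : G ≠ ⊥) : HasLapDeficit G 1 := by
  induction G using WellFoundedLT.induction generalizing inst with | _ G ih
  classical
  by_cases h : ∀ u v, G.Adj u v → (∀ a, G.Adj u a → a = v) ∨ ∀ b, G.Adj v b → b = u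
  · obtain ⟨u, ⟨v, huv : G.Adj u v⟩, hleaf⟩ := exists_center_of_forall_adj hne h
    have hcenter : (starGraph u).Adj u v := starGraph_center_adj huv.ne
    have hstar : HasLapDeficit (G ⊓ starGraph u) 1 :=
      .of_le_starGraph inf_le_right ⟨v, huv, hcenter⟩
    have hrest : HasLapDeficit (G \ starGraph u) 0 := by
      by_cases hbot : G \ starGraph u = ⊥
      · exact .of_eq_bot hbot
      · have hlt : G \ starGraph u < G := sdiff_le.lt_of_not_ge fun hle ↦ (hle huv).2 hcenter
        exact (ih _ hlt (hG.anti hlt.le) hbot).mono zero_le_one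
    exact (hstar.sup_of_disjoint_support hrest (disjoint_support_inf_starGraph_sdiff hleaf)).of_eq
      (sup_inf_sdiff ..)
  · push Not at h
    obtain ⟨u, v, huv, ⟨a, hua, hav⟩, b, hvb, hbu⟩ := h
    have hedge : edge u v ≤ G := (edge_le_iff G).2 (.inr huv)
    obtain ⟨A, B, hA, hB, hdisj, hAB⟩ := exists_sup_eq_sdiff_edge_of_isBridge
      (isAcyclic_iff_forall_adj_isBridge.1 hG huv) hua hav hvb hbu
    have hlt : A ⊔ B < G := hAB ▸ sdiff_le.lt_of_not_ge fun hle ↦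
      (hle huv).2 ((edge_adj ..).2 ⟨.inl ⟨rfl, rfl⟩, huv.ne⟩)
    have deficit_one {K : SimpleGraph V} (hK : K ≤ A ⊔ B) (hbot : K ≠ ⊥) : HasLapDeficit K 1 :=
      ih K (hK.trans_lt hlt) (hG.anti (hK.trans hlt.le)) hbot
    have hAB_deficit : HasLapDeficit (A ⊔ B) (1 + 1) :=
      (deficit_one le_sup_left hA).sup_of_disjoint_support (deficit_one le_sup_right hB) hdisj
    have hdelete : HasLapDeficit (G \ edge u v) (1 + (edge u v).edgeSet.ncard) := by
      rw [edgeSet_edge_of_ne huv.ne, Set.ncard_singleton]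
      exact hAB_deficit.of_eq hAB
    exact (hdelete.sup_of_disjoint disjoint_sdiff_self_left).of_eq (sdiff_sup_cancel hedge)

theorem sum_lapEigs_le_of_isAcyclic_general (G : SimpleGraph V) [DecidableRel G.Adj]
    (hG : G.IsAcyclic) {s : Finset V} (hs : s.Nonempty) :
    ∑ i ∈ s, (posSemidef_lapMatrix ℝ G).isHermitian.eigenvalues i ≤
      (#G.edgeFinset : ℝ) + 2 * #s - 1 := by
  obtain hbot | hne := eq_or_ne G ⊥
  · have hpsd := posSemidef_lapMatrix ℝ G
    have hs' : (1 : ℝ) ≤ #s := by exact_mod_cast hs.card_pos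
    have hE : #G.edgeFinset = 0 := card_eq_zero.2 (edgeFinset_eq_empty.2 hbot)
    calc ∑ i ∈ s, hpsd.isHermitian.eigenvalues i
        ≤ #s * 0 + RCLike.re (G.lapMatrix ℝ).trace :=
          sum_eigenvalues_le_of_le_smul_one_add hpsd.isHermitian hpsd.nonneg (by simp) s
      _ = 0 := by simp [trace_lapMatrix, hE]
      _ ≤ #G.edgeFinset + 2 * #s - 1 := by rw [hE]; push_cast; linarith
  · exact_mod_cast (hasLapDeficit_one_of_isAcyclic G hG hne).sum_eigenvalues_le s

end Forest

lemma exists_card_eq_sum_ithLargest_eq {n k : ℕ} (f : Fin n → ℝ) (hk : k ≤ n) :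
    ∃ s : Finset (Fin n), #s = k ∧ ∑ i ∈ Icc 1 k, ithLargest f i = ∑ j ∈ s, f j := by
  let pos : Fin k ↪ Fin n :=
    (Fin.castLEEmb hk).trans (Fin.revPerm.trans (Tuple.sort f)).toEmbedding
  refine ⟨univ.map pos, by simp, ?_⟩
  have ithLargest_succ (i : Fin k) : ithLargest f (i + 1) = f (pos i) :=
    dif_pos ⟨by omega, by omega⟩
  rw [sum_map, ← sum_congr rfl fun i _ ↦ ithLargest_succ i,
    Fin.sum_univ_eq_sum_range (fun i ↦ ithLargest f (i + 1)), range_eq_Ico,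
    sum_Ico_add' (ithLargest f) 0 k 1]
  rfl

/-- for `k ≥ 1` and a forest `G` with at least `k` vertices,
`∑_{i=1}^k λ_i(L(G)) ≤ |E| + 2k − 1`. -/
theorem sum_lapEigs_le_of_isAcyclic {n : ℕ} (G : SimpleGraph (Fin n)) [DecidableRel G.Adj]
    (hG : G.IsAcyclic) (k : ℕ) (hk1 : 1 ≤ k) (hk2 : k ≤ n) :
    ∑ i ∈ Finset.Icc 1 k, ithLargest (lapEigs G) i ≤
      (G.edgeFinset.card : ℝ) + 2 * (k : ℝ) - 1 := by
  obtain ⟨s, hcard, hsum⟩ := exists_card_eq_sum_ithLargest_eq (lapEigs G) hk2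
  rw [hsum, ← hcard]
  exact sum_lapEigs_le_of_isAcyclic_general G hG (card_pos.1 (hcard ▸ hk1))
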